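/- Let (Ω, 𝓐, P) be a probability space and L : Ω → [0,∞) be integrable with ∫ L dP = 1 and with L log L integrable (convention 0·log 0 = 0). For n ≥ 1 set Φ_n = max(min(L, n), 1/n), c_n = ∫ Φ_n dP, and L_n = Φ_n / c_n. Then c_n → 1 as n → ∞, and L_n log L_n converges to L log L in L¹(P), i.e. ∫ |L_n log L_n − L log L| dP → 0. -/

import Mathlib

open MeasureTheory

/-- The truncation `Φ_n = (L ∧ n) ∨ (1/n)`. -/
noncomputable def Phi {Ω : Type*} (L : Ω → ℝ) (n : ℕ) (x : Ω) : ℝ :=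
  max (min (L x) (n : ℝ)) (1 / (n : ℝ))

theorem Phi_nonneg' {Ω : Type*} (L : Ω → ℝ) (n : ℕ) (x : Ω) : 0 ≤ Phi L n x :=
  le_max_of_le_right (by positivity)

theorem Phi_le' {Ω : Type*} (L : Ω → ℝ) (hL0 : ∀ x, 0 ≤ L x) (n : ℕ) (hn : 1 ≤ n) (x : Ω) :
    Phi L n x ≤ L x + 1 := by
  have h1 : (1 : ℝ) / n ≤ 1 := by
    rw [div_le_one (by positivity)]; exact_mod_cast hn
  have := hL0 x
  exact max_le ((min_le_left _ _).trans (by linarith)) (by linarith)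

theorem Phi_tendsto' {Ω : Type*} (L : Ω → ℝ) (hL0 : ∀ x, 0 ≤ L x) (x : Ω) :
    Filter.Tendsto (fun n : ℕ => Phi L n x) Filter.atTop (nhds (L x)) := by
  have h1 : Filter.Tendsto (fun n : ℕ => min (L x) (n : ℝ)) Filter.atTop (nhds (L x)) := by
    apply tendsto_const_nhds.congr'
    filter_upwards [tendsto_natCast_atTop_atTop.eventually_ge_atTop (L x)] with n hn
    rw [min_eq_left hn]
  have h2 := h1.max (tendsto_one_div_atTop_nhds_zero_nat (𝕜 := ℝ))
  rw [max_eq_left (hL0 x)] at h2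
  exact h2

theorem Phi_log' {Ω : Type*} (L : Ω → ℝ) (n : ℕ) (hn : 1 ≤ n) (x : Ω) :
    |Phi L n x * Real.log (Phi L n x)| ≤ 1 + |L x * Real.log (L x)| := by
  have h1 : (1 : ℝ) / n ≤ 1 := by
    rw [div_le_one (by positivity)]; exact_mod_cast hn
  have hpos : 0 < Phi L n x := lt_max_of_lt_right (by positivity)
  rcases le_or_gt (Phi L n x) 1 with h | h
  · have := Real.abs_log_mul_self_lt _ hpos h
    rw [mul_comm] at this
    have := abs_nonneg (L x * Real.log (L x))
    linarith
  · have hle : Phi L n x ≤ L x := by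
      rcases le_total (min (L x) (n : ℝ)) (1 / n) with h2 | h2
      · have : Phi L n x = 1 / n := max_eq_right h2
        linarith
      · have : Phi L n x = min (L x) n := max_eq_left h2
        rw [this]; exact min_le_left _ _
    have h3 : 0 ≤ Real.log (Phi L n x) := Real.log_nonneg h.le
    have h4 : Real.log (Phi L n x) ≤ Real.log (L x) := Real.log_le_log hpos hle
    rw [abs_of_nonneg (mul_nonneg hpos.le h3)]
    have := mul_le_mul hle h4 h3 (hpos.le.trans hle)
    have := le_abs_self (L x * Real.log (L x))
    linarith

/-- For an integrable density `L ≥ 0` with `∫ L = 1` and `L log L` integrable,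
setting `Φ_n = (L ∧ n) ∨ (1/n)`, `c_n = ∫ Φ_n` and `L_n = Φ_n / c_n`, one has
`c_n → 1` and `L_n log L_n → L log L` in `L¹(P)`. -/
theorem stmt_10 {Ω : Type*} [MeasurableSpace Ω] (P : Measure Ω) [IsProbabilityMeasure P]
    (L : Ω → ℝ) (hL0 : ∀ x, 0 ≤ L x) (hLint : Integrable L P)
    (hL1 : ∫ x, L x ∂P = 1)
    (hLlog : Integrable (fun x => L x * Real.log (L x)) P) :
    Filter.Tendsto (fun n : ℕ => ∫ x, Phi L n x ∂P) Filter.atTop (nhds 1) ∧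
    Filter.Tendsto (fun n : ℕ =>
        ∫ x, |(Phi L n x / ∫ x', Phi L n x' ∂P) *
            Real.log (Phi L n x / ∫ x', Phi L n x' ∂P)
          - L x * Real.log (L x)| ∂P)
      Filter.atTop (nhds 0) := by
  have hm : ∀ n, AEMeasurable (Phi L n) P := fun n =>
    (hLint.aemeasurable.min aemeasurable_const).max aemeasurable_const
  have hc : Filter.Tendsto (fun n : ℕ => ∫ x, Phi L n x ∂P) Filter.atTop (nhds 1) := by
    rw [← hL1]
    apply tendsto_integral_filter_of_dominated_convergence (fun x => L x + 1)
    · exact Filter.Eventually.of_forall fun n => (hm n).aestronglyMeasurable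
    · filter_upwards [Filter.eventually_ge_atTop 1] with n hn
      refine Filter.Eventually.of_forall fun x => ?_
      rw [Real.norm_of_nonneg (Phi_nonneg' L n x)]
      exact Phi_le' L hL0 n hn x
    · exact hLint.add (integrable_const _)
    · exact Filter.Eventually.of_forall fun x => Phi_tendsto' L hL0 x
  refine ⟨hc, ?_⟩
  have hgen : ∀ c : ℕ → ℝ, Filter.Tendsto c Filter.atTop (nhds 1) →
      Filter.Tendsto (fun n : ℕ => ∫ x, |(Phi L n x / c n) * Real.log (Phi L n x / c n)
          - L x * Real.log (L x)| ∂P) Filter.atTop (nhds 0) := by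
    intro c hc
    have h0 : (0 : ℝ) = ∫ x, (0 : ℝ) ∂P := by simp
    rw [h0]
    have hlog : Filter.Tendsto (fun n => Real.log (c n)) Filter.atTop (nhds 0) := by
      have := hc.log one_ne_zero
      rwa [Real.log_one] at this
    apply tendsto_integral_filter_of_dominated_convergence
      (fun x => 2 * (1 + |L x * Real.log (L x)|) + 2 * (L x + 1) + |L x * Real.log (L x)|)
    · refine Filter.Eventually.of_forall fun n => ?_
      have h1 := (hm n).div_const (c n)
      have h2 := (h1.mul h1.log).sub hLlog.aemeasurable
      exact h2.aestronglyMeasurable.norm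
    · filter_upwards [Filter.eventually_ge_atTop 1, hc.eventually_const_le (u := 1/2) (by norm_num),
        hlog.abs.eventually_le_const (u := 1) (by norm_num)] with n hn hcn hln
      refine Filter.Eventually.of_forall fun x => ?_
      have hpos : 0 < Phi L n x := lt_max_of_lt_right (by positivity)
      have hcp : 0 < c n := by linarith
      have hinv : (c n)⁻¹ ≤ 2 := by
        rw [inv_le_comm₀ hcp (by norm_num)]; linarith
      rw [Real.norm_eq_abs, abs_abs]
      refine (abs_sub _ _).trans ?_
      have e : Phi L n x / c n * Real.log (Phi L n x / c n)
          = (c n)⁻¹ * (Phi L n x * Real.log (Phi L n x))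
            - (c n)⁻¹ * (Phi L n x * Real.log (c n)) := by
        rw [Real.log_div hpos.ne' hcp.ne']; ring
      have i0 : 0 ≤ (c n)⁻¹ := by positivity
      have b1 : |(c n)⁻¹ * (Phi L n x * Real.log (Phi L n x))|
          ≤ 2 * (1 + |L x * Real.log (L x)|) := by
        rw [abs_mul, abs_of_nonneg i0]
        exact mul_le_mul hinv (Phi_log' L n hn x) (abs_nonneg _) (by norm_num)
      have b2 : |(c n)⁻¹ * (Phi L n x * Real.log (c n))| ≤ 2 * (L x + 1) := by
        rw [abs_mul, abs_of_nonneg i0, abs_mul, abs_of_pos hpos]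
        refine mul_le_mul hinv ?_ (by positivity) (by norm_num)
        have := Phi_le' L hL0 n hn x
        nlinarith
      rw [e]
      have := abs_sub ((c n)⁻¹ * (Phi L n x * Real.log (Phi L n x)))
        ((c n)⁻¹ * (Phi L n x * Real.log (c n)))
      linarith
    · have h1 := hLlog.abs
      exact ((((integrable_const 1).add h1).const_mul 2).add
        ((hLint.add (integrable_const 1)).const_mul 2)).add h1
    · refine Filter.Eventually.of_forall fun x => ?_
      have h1 := (Phi_tendsto' L hL0 x).div hc one_ne_zero
      rw [div_one] at h1
      have h2 := (Real.continuous_mul_log.tendsto (L x)).comp h1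
      have h3 := (h2.sub_const (L x * Real.log (L x))).abs
      rw [sub_self, abs_zero] at h3
      exact h3
  apply hgen
  assumption
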